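/- arXiv:math/0602346 — 2 statements merged into one kernel-verified Lean document; each statement's English description precedes it below -/
import Mathlib

section
/- Let μ be a Borel probability measure on ℝ with ∫_ℝ e^{itx} dμ(x) = e^{−|t|^α} for all t (0 < α ≤ 2), and let w₁, w₂ : ℝ → [0,∞) be integrable even functions. Define h₁(x,y) = ∫_ℝ cos(t(x−y)) w₁(t) dt, c₁ = (1/2) ∫_ℝ e^{−2|t|^α} w₁(t) dt, c₂ = ∫_ℝ e^{−2|t|^α} w₂(t) dt, and h₂(x) = ∫_ℝ cos(tx) e^{−|t|^α} (w₁(t) − w₂(t)) dt − c₁ + c₂. Then for every x₁ ∈ ℝ: (a) ∫_ℝ h₁(x₁, y) dμ(y) = ∫_ℝ cos(t x₁) e^{−|t|^α} w₁(t) dt; (b) ∫_ℝ h₂(y) dμ(y) = c₁; and (c) ∫_ℝ ( h₁(x₁, y) − h₂(x₁) − h₂(y) ) dμ(y) = ∫_ℝ cos(t x₁) e^{−|t|^α} w₂(t) dt − c₂. -/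
open MeasureTheory Real

lemma aux_cos (μ : Measure ℝ) [IsProbabilityMeasure μ] (φ : ℝ → ℝ)
    (hchar : ∀ t : ℝ, ∫ x, Complex.exp (Complex.I * t * x) ∂μ = (φ t : ℂ)) (t a : ℝ) :
    ∫ y, Real.cos (t * (a - y)) ∂μ = Real.cos (t * a) * φ t := by
  have hint : Integrable (fun y : ℝ => Complex.exp (Complex.I * t * y)) μ := by
    refine Integrable.of_bound (C := 1) (by fun_prop) (Filter.Eventually.of_forall fun y => ?_)
    rw [show Complex.I * t * y = ((t * y : ℝ) : ℂ) * Complex.I by push_cast; ring,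
      Complex.norm_exp_ofReal_mul_I]
  have hre : ∀ y : ℝ, (Complex.exp (Complex.I * t * y)).re = Real.cos (t * y) := fun y => by
    rw [show Complex.I * t * y = ((t * y : ℝ) : ℂ) * Complex.I by push_cast; ring,
      Complex.exp_ofReal_mul_I_re]
  have him : ∀ y : ℝ, (Complex.exp (Complex.I * t * y)).im = Real.sin (t * y) := fun y => by
    rw [show Complex.I * t * y = ((t * y : ℝ) : ℂ) * Complex.I by push_cast; ring,
      Complex.exp_ofReal_mul_I_im]
  have hc : ∫ y, Real.cos (t * y) ∂μ = φ t := by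
    have := integral_re hint
    simp only [RCLike.re_to_complex, hre, hchar t, Complex.ofReal_re] at this
    exact this
  have hs : ∫ y, Real.sin (t * y) ∂μ = 0 := by
    have := integral_im hint
    simp only [RCLike.im_to_complex, him, hchar t, Complex.ofReal_im] at this
    exact this
  have hci : Integrable (fun y : ℝ => Real.cos (t * y)) μ :=
    Integrable.of_bound (C := 1) (by fun_prop)
      (Filter.Eventually.of_forall fun y => Real.abs_cos_le_one _)
  have hsi : Integrable (fun y : ℝ => Real.sin (t * y)) μ :=
    Integrable.of_bound (C := 1) (by fun_prop)
      (Filter.Eventually.of_forall fun y => Real.abs_sin_le_one _)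
  simp only [mul_sub, Real.cos_sub]
  rw [integral_add (hci.const_mul _) (hsi.const_mul _), integral_const_mul, integral_const_mul,
    hc, hs]
  ring

lemma aux_main (μ : Measure ℝ) [IsProbabilityMeasure μ] (φ : ℝ → ℝ)
    (hchar : ∀ t : ℝ, ∫ x, Complex.exp (Complex.I * t * x) ∂μ = (φ t : ℂ))
    (f : ℝ → ℝ) (hf : Integrable f) (a : ℝ) :
    Integrable (fun y => ∫ t : ℝ, Real.cos (t * (a - y)) * f t) μ ∧
    ∫ y, (∫ t : ℝ, Real.cos (t * (a - y)) * f t) ∂μ = ∫ t : ℝ, Real.cos (t * a) * φ t * f t := by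
  have hprod : Integrable (fun p : ℝ × ℝ => Real.cos (p.2 * (a - p.1)) * f p.2)
      (μ.prod volume) := by
    refine (hf.comp_snd μ).bdd_mul (c := 1) (by fun_prop)
      (Filter.Eventually.of_forall fun p => Real.abs_cos_le_one _)
  refine ⟨hprod.integral_prod_left, ?_⟩
  rw [integral_integral_swap hprod]
  refine integral_congr_ae (Filter.Eventually.of_forall fun t => ?_)
  simp only
  rw [integral_mul_const, aux_cos μ φ hchar]

/-- Projections of the U-statistic kernel arising from the EISE scale estimating
equation, for a standard symmetric `α`-stable distribution `μ`. -/
theorem stmt14 (μ : Measure ℝ) [IsProbabilityMeasure μ] (α : ℝ) (hα : α ∈ Set.Ioc (0 : ℝ) 2)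
    (hchar : ∀ t : ℝ, ∫ x, Complex.exp (Complex.I * t * x) ∂μ = (Real.exp (-|t| ^ α) : ℂ))
    (w₁ w₂ : ℝ → ℝ) (hw₁0 : ∀ t, 0 ≤ w₁ t) (hw₂0 : ∀ t, 0 ≤ w₂ t)
    (hw₁e : ∀ t, w₁ (-t) = w₁ t) (hw₂e : ∀ t, w₂ (-t) = w₂ t)
    (hw₁i : Integrable w₁) (hw₂i : Integrable w₂)
    (h₁ : ℝ → ℝ → ℝ) (hh₁ : ∀ x y, h₁ x y = ∫ t : ℝ, Real.cos (t * (x - y)) * w₁ t)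
    (c₁ c₂ : ℝ) (hc₁ : c₁ = (1 / 2) * ∫ t : ℝ, Real.exp (-2 * |t| ^ α) * w₁ t)
    (hc₂ : c₂ = ∫ t : ℝ, Real.exp (-2 * |t| ^ α) * w₂ t)
    (h₂ : ℝ → ℝ)
    (hh₂ : ∀ x, h₂ x = (∫ t : ℝ, Real.cos (t * x) * Real.exp (-|t| ^ α) * (w₁ t - w₂ t))
        - c₁ + c₂)
    (x₁ : ℝ) :
    (∫ y, h₁ x₁ y ∂μ = ∫ t : ℝ, Real.cos (t * x₁) * Real.exp (-|t| ^ α) * w₁ t) ∧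
    (∫ y, h₂ y ∂μ = c₁) ∧
    (∫ y, (h₁ x₁ y - h₂ x₁ - h₂ y) ∂μ
        = (∫ t : ℝ, Real.cos (t * x₁) * Real.exp (-|t| ^ α) * w₂ t) - c₂) := by
  have E : ∀ t : ℝ, Real.exp (-|t| ^ α) * Real.exp (-|t| ^ α) = Real.exp (-2 * |t| ^ α) :=
    fun t => by rw [← Real.exp_add]; ring_nf
  have hφm : Measurable (fun t : ℝ => Real.exp (-|t| ^ α)) := by fun_prop
  have hφb : ∀ t : ℝ, ‖Real.exp (-|t| ^ α)‖ ≤ 1 := fun t => by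
    rw [Real.norm_eq_abs, abs_of_pos (Real.exp_pos _), Real.exp_le_one_iff]
    have := Real.rpow_nonneg (abs_nonneg t) α
    linarith
  have mulφ : ∀ f : ℝ → ℝ, Integrable f → Integrable (fun t => Real.exp (-|t| ^ α) * f t) :=
    fun f hf => hf.bdd_mul (c := 1) hφm.aestronglyMeasurable (Filter.Eventually.of_forall hφb)
  have mulc : ∀ f : ℝ → ℝ, Integrable f → ∀ x : ℝ,
      Integrable (fun t => Real.cos (t * x) * Real.exp (-|t| ^ α) * f t) := fun f hf x => by
    simp only [mul_assoc]
    exact (mulφ f hf).bdd_mul (c := 1) (by fun_prop)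
      (Filter.Eventually.of_forall fun t => Real.abs_cos_le_one _)
  obtain ⟨i1, e1⟩ := aux_main μ _ hchar w₁ hw₁i x₁
  obtain ⟨i2, e2⟩ := aux_main μ _ hchar _ (mulφ _ (hw₁i.sub hw₂i)) 0
  simp only [← hh₁] at i1 e1
  have hTwo : ∀ y, h₂ y = (∫ t : ℝ, Real.cos (t * (0 - y)) *
      (Real.exp (-|t| ^ α) * (w₁ - w₂) t)) - c₁ + c₂ := fun y => by
    rw [hh₂]
    simp [mul_assoc]
  have iTwo : Integrable h₂ μ := by
    rw [funext hTwo]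
    exact (i2.sub (integrable_const _)).add (integrable_const _)
  have eTwo : ∫ y, h₂ y ∂μ = c₁ := by
    simp only [hTwo]
    rw [integral_add (by exact i2.sub (integrable_const _)) (integrable_const _),
      integral_sub i2 (integrable_const _), e2]
    have : ∀ t : ℝ, Real.cos (t * 0) * Real.exp (-|t| ^ α) *
        (Real.exp (-|t| ^ α) * (w₁ - w₂) t) =
        Real.exp (-2 * |t| ^ α) * w₁ t - Real.exp (-2 * |t| ^ α) * w₂ t := fun t => by
      rw [← E]; simp; ring
    simp only [this]
    have j : ∀ f : ℝ → ℝ, Integrable f → Integrable (fun t => Real.exp (-2 * |t| ^ α) * f t) :=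
      fun f hf => by
        simp only [← E, mul_assoc]
        exact mulφ _ (mulφ f hf)
    rw [integral_sub (j _ hw₁i) (j _ hw₂i), ← hc₂]
    simp only [integral_const, probReal_univ, one_smul]
    linarith
  refine ⟨e1, eTwo, ?_⟩
  rw [integral_sub (by exact i1.sub (integrable_const _)) iTwo, integral_sub i1 (integrable_const _), e1, eTwo,
    hh₂]
  simp only [mul_sub]
  rw [integral_sub (mulc _ hw₁i x₁) (mulc _ hw₂i x₁)]
  simp only [integral_const, probReal_univ, one_smul]
  ring
end

section
/- Let γ be the Euler–Mascheroni constant and h_α(x) = ((1−x²)/(1+x²))((1/2)log(1+x²) − 1 + γ) + (2x/(1+x²)) arctan x. Then for every nonzero s ∈ ℝ, ∫_ℝ e^{isx} h_α(x) · (1/(π(1+x²))) dx = −|s| e^{−|s|} log|s|. -/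
open MeasureTheory Real

lemma aux_mellin (z : ℂ) (hz : 0 < z.re) (s : ℂ) (hs : 0 < s.re) :
    MellinConvergent (fun t : ℝ => Real.log t • Complex.exp (-(z * t))) s ∧
      HasDerivAt (mellin (fun t : ℝ => Complex.exp (-(z * t))))
        (mellin (fun t : ℝ => Real.log t • Complex.exp (-(z * t))) s) s := by
  have hc : Continuous (fun t : ℝ => Complex.exp (-(z * t))) := by fun_prop
  refine mellin_hasDerivAt_of_isBigO_rpow (a := s.re + 1) (b := 0) ?_ ?_ (by linarith) ?_ hs
  · exact hc.locallyIntegrable.locallyIntegrableOn _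
  · refine Asymptotics.IsBigO.trans ?_ (isLittleO_exp_neg_mul_rpow_atTop hz (-(s.re+1))).isBigO
    refine Asymptotics.IsBigO.of_bound 1 (Filter.Eventually.of_forall fun t => ?_)
    simp [Complex.norm_exp]
  · simp only [neg_zero, Real.rpow_zero]
    exact (hc.tendsto 0).isBigO_one ℝ |>.mono nhdsWithin_le_nhds

lemma aux_int (z : ℂ) (hz : 0 < z.re) (n : ℕ) :
    IntegrableOn (fun t : ℝ => (t : ℂ) ^ n * Real.log t * Complex.exp (-(z * t))) (Set.Ioi 0) := by
  have h := (aux_mellin z hz (n + 1) (by simp; positivity)).1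
  rw [MellinConvergent] at h
  refine h.congr_fun (fun t ht => ?_) measurableSet_Ioi
  simp [mul_assoc]

lemma aux_real (r : ℝ) (hr : 0 < r) :
    ∫ t in Set.Ioi (0:ℝ), ((t : ℂ) ^ 1 * Real.log t * Complex.exp (-((r:ℂ) * t)))
      = (1 - Real.eulerMascheroniConstant - Complex.log r) / (r:ℂ) ^ 2 := by
  have h := (aux_mellin r (by simpa) 2 (by simp)).2
  have hG : HasDerivAt Complex.Gamma (-Real.eulerMascheroniConstant + 1) 2 := by
    have := Complex.hasDerivAt_Gamma_nat 1
    norm_num at this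
    exact this
  have hr' : (1 / (r:ℂ)) ≠ 0 := by simp [hr.ne']
  have hp : HasDerivAt (fun s : ℂ => (1 / (r:ℂ)) ^ s * Complex.Gamma s) _ 2 :=
    (HasDerivAt.const_cpow (hasDerivAt_id (2:ℂ)) (Or.inl hr')).mul hG
  have he : (mellin (fun t : ℝ => Complex.exp (-((r:ℂ) * t)))) =ᶠ[nhds 2]
      (fun s : ℂ => (1 / (r:ℂ)) ^ s * Complex.Gamma s) := by
    have : ∀ᶠ s : ℂ in nhds 2, 0 < s.re :=
      (isOpen_lt continuous_const Complex.continuous_re).mem_nhds (by simp)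
    filter_upwards [this] with s hs
    rw [mellin, ← Complex.integral_cpow_mul_exp_neg_mul_Ioi hs hr]
    rfl
  have := h.unique (hp.congr_of_eventuallyEq he)
  rw [mellin] at this
  have h2 : ∫ t in Set.Ioi (0:ℝ), ((t : ℂ) ^ 1 * Real.log t * Complex.exp (-((r:ℂ) * t)))
      = ∫ t in Set.Ioi (0:ℝ), (t : ℂ) ^ ((2:ℂ) - 1) • (Real.log t • Complex.exp (-((r:ℂ) * t))) := by
    refine setIntegral_congr_fun measurableSet_Ioi fun t ht => ?_
    have : (2:ℂ) - 1 = 1 := by norm_num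
    simp [this, mul_assoc]
  rw [h2, this]
  have h3 : Complex.Gamma 2 = 1 := by
    simp
  have h4 : Complex.log (1 / (r:ℂ)) = - Complex.log r := by
    rw [one_div, Complex.log_inv]
    rw [Complex.arg_ofReal_of_nonneg hr.le]
    exact Real.pi_pos.ne
  simp only [h3, h4, id, Complex.cpow_ofNat]
  field_simp
  ring

lemma aux_diff (z : ℂ) (hz : 0 < z.re) :
    DifferentiableAt ℂ (fun z : ℂ => 
      ∫ t in Set.Ioi (0:ℝ), ((t : ℂ) ^ 1 * Real.log t * Complex.exp (-(z * t)))) z := by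
  have h := hasDerivAt_integral_of_dominated_loc_of_deriv_le (μ := volume.restrict (Set.Ioi (0:ℝ)))
    (F := fun z : ℂ => fun t : ℝ => ((t : ℂ) ^ 1 * Real.log t * Complex.exp (-(z * t))))
    (F' := fun z : ℂ => fun t : ℝ => -((t : ℂ) ^ 2 * Real.log t * Complex.exp (-(z * t))))
    (bound := fun t : ℝ => ‖(t : ℂ) ^ 2 * Real.log t * Complex.exp (-(((z.re / 2 : ℝ) : ℂ) * t))‖)
    (x₀ := z) (s := {w | z.re / 2 < w.re}) ?_ ?_ ?_ ?_ ?_ ?_ ?_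
  · exact h.2.differentiableAt
  · exact (isOpen_lt continuous_const Complex.continuous_re).mem_nhds (by simp; linarith)
  · filter_upwards with w
    exact Measurable.aestronglyMeasurable (by fun_prop)
  · exact aux_int z hz 1
  · exact Measurable.aestronglyMeasurable (by fun_prop)
  · filter_upwards [ae_restrict_mem measurableSet_Ioi] with t ht w hw
    rw [norm_neg, norm_mul, norm_mul _ (Complex.exp (-(((z.re / 2 : ℝ) : ℂ) * t)))]
    refine mul_le_mul_of_nonneg_left ?_ (norm_nonneg _)
    rw [Complex.norm_exp, Complex.norm_exp]
    simp only [Set.mem_ofPred_eq, Set.mem_Ioi] at hw ht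
    simp
    nlinarith
  · exact (aux_int ((z.re / 2 : ℝ) : ℂ) (by simpa using hz) 2).norm
  · filter_upwards with t w hw
    have h1 : HasDerivAt (fun w : ℂ => -(w * t)) (-(1 * t)) w :=
      ((hasDerivAt_id w).mul_const _).neg
    exact (h1.cexp.const_mul ((t : ℂ) ^ 1 * Real.log t)).congr_deriv (by ring)

lemma aux_J (z : ℂ) (hz : 0 < z.re) :
    ∫ t in Set.Ioi (0:ℝ), ((t : ℂ) ^ 1 * Real.log t * Complex.exp (-(z * t)))
      = (1 - Real.eulerMascheroniConstant - Complex.log z) / z ^ 2 := by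
  have hopen : IsOpen {w : ℂ | 0 < w.re} := isOpen_lt continuous_const Complex.continuous_re
  have hf : AnalyticOnNhd ℂ (fun z : ℂ => 
      ∫ t in Set.Ioi (0:ℝ), ((t : ℂ) ^ 1 * Real.log t * Complex.exp (-(z * t)))) {w | 0 < w.re} :=
    DifferentiableOn.analyticOnNhd (fun w hw => (aux_diff w hw).differentiableWithinAt) hopen
  have hg : AnalyticOnNhd ℂ (fun z : ℂ => 
      (1 - Real.eulerMascheroniConstant - Complex.log z) / z ^ 2) {w | 0 < w.re} := by
    refine DifferentiableOn.analyticOnNhd (fun w hw => ?_) hopen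
    have hw' : w ≠ 0 := by rintro rfl; simp at hw
    refine DifferentiableAt.differentiableWithinAt ?_
    refine DifferentiableAt.div ?_ (by fun_prop) (by simpa)
    exact (differentiableAt_const _).sub (Complex.differentiableAt_log (Or.inl hw))
  refine hf.eqOn_of_preconnected_of_frequently_eq hg
    (convex_halfSpace_re_gt 0).isPreconnected (z₀ := 1) (by simp) ?_ hz
  have ht : Filter.Tendsto (fun r : ℝ => (r : ℂ)) (nhdsWithin 1 {1}ᶜ) (nhdsWithin 1 {1}ᶜ) := by
    refine tendsto_nhdsWithin_iff.2 ⟨?_, ?_⟩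
    · exact (Complex.continuous_ofReal.tendsto' 1 1 (by simp)).mono_left nhdsWithin_le_nhds
    · filter_upwards [self_mem_nhdsWithin] with r hr
      simpa using hr
  refine ht.frequently (Filter.Eventually.frequently ?_)
  have : ∀ᶠ r : ℝ in nhds 1, 0 < r := lt_mem_nhds one_pos
  filter_upwards [nhdsWithin_le_nhds this] with r hr
  exact aux_real r hr

lemma aux_log (x : ℝ) : Complex.log (1 + x * Complex.I) =
    ((1/2 * Real.log (1 + x^2) : ℝ) : ℂ) + Real.arctan x * Complex.I := by
  have hn : ‖(1 + x * Complex.I : ℂ)‖ = √(1 + x^2) := by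
    rw [Complex.norm_eq_sqrt_sq_add_sq]; simp
  rw [Complex.log, hn, Complex.arg_of_re_nonneg (by simp), hn, Real.arctan_eq_arcsin,
    Real.log_sqrt (by positivity)]
  simp
  ring

/-- the target function -/
noncomputable def auxg (v : ℝ) : ℂ := -((|v| : ℝ) : ℂ) * (Real.exp (-|v|) : ℂ) * ((Real.log |v| : ℝ) : ℂ)

/-- the source function -/
noncomputable def auxh (x : ℝ) : ℝ := (((1 - x ^ 2) / (1 + x ^ 2)) * ((1 / 2) * Real.log (1 + x ^ 2) - 1
              + Real.eulerMascheroniConstant)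
            + (2 * x / (1 + x ^ 2)) * Real.arctan x) * (1 / (π * (1 + x ^ 2)))

lemma auxg_cont : Continuous auxg := by
  have : auxg = fun v : ℝ => (((Real.negMulLog |v|) * Real.exp (-|v|) : ℝ) : ℂ) := by
    funext v
    simp only [auxg, Real.negMulLog]
    push_cast
    ring
  rw [this]
  have := Real.continuous_negMulLog
  fun_prop

lemma auxg_neg (v : ℝ) : auxg (-v) = auxg v := by simp [auxg]

lemma auxg_eq {v : ℝ} (hv : 0 < v) (c : ℂ) : Complex.exp (-(c * v)) * auxg v =
    -((v : ℂ) ^ 1 * Real.log v * Complex.exp (-((1 + c) * v))) := by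
  simp only [auxg, abs_of_pos hv]
  rw [show -((1 + c) * (v:ℂ)) = -(c * v) + -v by ring, Complex.exp_add]
  push_cast
  ring

lemma auxg_int : Integrable auxg := by
  have h1 : IntegrableOn auxg (Set.Ioi 0) := by
    refine (aux_int 1 (by simp) 1).neg.congr_fun (fun t ht => ?_) measurableSet_Ioi
    have := auxg_eq ht 0
    simp at this
    simp [this]
  have h2 : IntegrableOn auxg (Set.Iic 0) := by
    rw [integrableOn_Iic_iff_integrableOn_Iio]
    have := h1.comp_neg
    simpa [auxg_neg] using this
  rw [← integrableOn_univ, ← Set.Iic_union_Ioi (a := (0:ℝ))]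
  exact h2.union h1

lemma aux_half (c : ℂ) (hc : 0 < (1 + c).re) : ∫ v in Set.Ioi (0:ℝ), Complex.exp (-(c * v)) * auxg v
    = -((1 - Real.eulerMascheroniConstant - Complex.log (1 + c)) / (1 + c) ^ 2) := by
  rw [← aux_J _ hc, ← integral_neg]
  exact setIntegral_congr_fun measurableSet_Ioi fun t ht => auxg_eq ht c

open FourierTransform in
lemma auxF (w : ℝ) : 𝓕 auxg w = ((2 * π * auxh (2 * π * w) : ℝ) : ℂ) := by
  have hint : Integrable (fun v : ℝ => Complex.exp (↑(-2 * π * v * w) * Complex.I) • auxg v) := by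
    refine auxg_int.norm.mono' ?_ ?_
    · have := auxg_cont
      exact Continuous.aestronglyMeasurable (by fun_prop)
    · filter_upwards with v
      rw [norm_smul, Complex.norm_exp_ofReal_mul_I, one_mul]
  rw [Real.fourier_real_eq_integral_exp_smul, ← intervalIntegral.integral_Iic_add_Ioi
    (b := 0) hint.integrableOn hint.integrableOn]
  have e1 : ∫ v in Set.Ioi (0:ℝ), Complex.exp (↑(-2 * π * v * w) * Complex.I) • auxg v
      = ∫ v in Set.Ioi (0:ℝ), Complex.exp (-(((2 * π * w : ℝ) * Complex.I) * v)) * auxg v := by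
    congr 1 with v
    rw [smul_eq_mul]
    congr 2
    push_cast
    ring
  have e2 : ∫ v in Set.Iic (0:ℝ), Complex.exp (↑(-2 * π * v * w) * Complex.I) • auxg v
      = ∫ v in Set.Ioi (0:ℝ), Complex.exp (-(((-(2 * π * w) : ℝ) * Complex.I) * v)) * auxg v := by
    have := integral_comp_neg_Ioi 0 (fun v : ℝ => Complex.exp (↑(-2 * π * v * w) * Complex.I) • auxg v)
    rw [neg_zero] at this
    rw [← this]
    congr 1 with v
    rw [smul_eq_mul, auxg_neg]
    congr 2
    push_cast
    ring
  rw [e1, e2, aux_half _ (by simp), aux_half _ (by simp), aux_log, aux_log, auxh]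
  generalize 2 * π * w = x
  have hpos : (0:ℝ) < 1 + x ^ 2 := by positivity
  have n0 : (1 + (x:ℂ) ^ 2) ≠ 0 := by exact_mod_cast hpos.ne'
  have hm : (1 + (x:ℂ) * Complex.I) * (1 - x * Complex.I) = 1 + (x:ℂ)^2 := by
    linear_combination (-(x:ℂ)^2) * Complex.I_sq
  have n1 : (1 + (x:ℂ) * Complex.I) ≠ 0 := left_ne_zero_of_mul (hm ▸ n0)
  have n2 : (1 - (x:ℂ) * Complex.I) ≠ 0 := right_ne_zero_of_mul (hm ▸ n0)
  have hπ : (π : ℂ) ≠ 0 := by exact_mod_cast Real.pi_ne_zero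
  rw [Real.arctan_neg, neg_sq]
  generalize Real.arctan x = A
  generalize Real.log (1 + x^2) = L
  generalize Real.eulerMascheroniConstant = γ
  have i1 : ∀ a : ℂ, a / (1 + (x:ℂ) * Complex.I)^2 = a * (1 - x * Complex.I)^2 / (1 + (x:ℂ)^2)^2 := by
    intro a
    rw [← hm]; field_simp
  have i2 : ∀ a : ℂ, a / (1 + ((-x : ℝ):ℂ) * Complex.I)^2 = a * (1 + x * Complex.I)^2 / (1 + (x:ℂ)^2)^2 := by
    intro a
    rw [← hm, show (1 + ((-x : ℝ):ℂ) * Complex.I) = 1 - x * Complex.I by push_cast; ring]; field_simp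
  rw [i1, i2]
  push_cast
  field_simp
  ring_nf
  simp only [Complex.I_sq]
  ring

lemma auxh_cont : Continuous auxh := by
  unfold auxh
  have h : ∀ x : ℝ, 1 + x^2 ≠ 0 := fun x => by positivity
  have h' : ∀ x : ℝ, π * (1 + x^2) ≠ 0 := fun x => by positivity
  fun_prop (disch := assumption)

lemma auxh_int : Integrable auxh := by
  have hI := (integrable_rpow_neg_one_add_norm_sq (E := ℝ) (μ := volume) (r := 3/2) (by norm_num)).const_mul
    (5 + |Real.eulerMascheroniConstant| + π)
  refine hI.mono' auxh_cont.aestronglyMeasurable (Filter.Eventually.of_forall fun x => ?_)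
  rw [Real.norm_eq_abs, Real.norm_eq_abs, sq_abs]
  have hu : (1:ℝ) ≤ 1 + x ^ 2 := by nlinarith [sq_nonneg x]
  have h1 : |(1 - x ^ 2) / (1 + x ^ 2)| ≤ 1 := by
    rw [abs_div, abs_of_pos (by positivity : 0 < 1 + x^2), div_le_one (by positivity), abs_le]
    constructor <;> nlinarith [sq_nonneg x]
  have h2 : |2 * x / (1 + x ^ 2)| ≤ 1 := by
    rw [abs_div, abs_of_pos (by positivity : 0 < 1 + x^2), div_le_one (by positivity), abs_le]
    constructor <;> nlinarith [sq_nonneg (x-1), sq_nonneg (x+1)]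
  have h3 : |Real.arctan x| ≤ π := by
    rw [abs_le]
    constructor <;> linarith [Real.arctan_lt_pi_div_two x, Real.neg_pi_div_two_lt_arctan x, Real.pi_pos]
  have hL0 := Real.log_nonneg hu
  have hL := Real.log_le_rpow_div (by positivity : 0 ≤ 1 + x^2) (by norm_num : (0:ℝ) < 1/4)
  have hU : 1 ≤ (1 + x^2)^(1/4:ℝ) := Real.one_le_rpow hu (by norm_num)
  have hsplit : (1 + x^2)^(-(3/2)/2 : ℝ) = (1 + x^2)^(1/4:ℝ) * (1 / (1+x^2)) := by
    rw [one_div (1+x^2), ← Real.rpow_neg_one, ← Real.rpow_add (by positivity)]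
    norm_num
  rw [hsplit, auxh, abs_mul]
  set U := (1 + x^2)^(1/4:ℝ)
  have h4 : |1 / (π * (1 + x ^ 2))| ≤ 1 / (1 + x^2) := by
    rw [abs_of_pos (by positivity)]
    apply one_div_le_one_div_of_le (by positivity)
    nlinarith [Real.pi_gt_three]
  rw [← mul_assoc]
  refine mul_le_mul ?_ h4 (abs_nonneg _) (by positivity)
  have h5 : |1 / 2 * Real.log (1 + x ^ 2) - 1 + Real.eulerMascheroniConstant| ≤
      2 * U + 1 + |Real.eulerMascheroniConstant| := by
    refine (abs_add_le _ _).trans ?_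
    gcongr
    rw [abs_le]
    constructor <;> linarith
  refine (abs_add_le _ _).trans ?_
  rw [abs_mul, abs_mul]
  have h6 := mul_le_mul h1 h5 (abs_nonneg _) zero_le_one
  have h7 := mul_le_mul h2 h3 (abs_nonneg _) zero_le_one
  have h8 : 0 ≤ (|Real.eulerMascheroniConstant| + π) * (U - 1) :=
    mul_nonneg (by positivity) (by linarith)
  linarith

theorem stmt17 (s : ℝ) (hs : s ≠ 0) :
    ∫ x : ℝ, Complex.exp (Complex.I * s * x)
        * ((((1 - x ^ 2) / (1 + x ^ 2)) * ((1 / 2) * Real.log (1 + x ^ 2) - 1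
              + Real.eulerMascheroniConstant)
            + (2 * x / (1 + x ^ 2)) * Real.arctan x) * (1 / (π * (1 + x ^ 2))) : ℝ)
      = -((|s| : ℝ) : ℂ) * (Real.exp (-|s|) : ℂ) * ((Real.log |s| : ℝ) : ℂ) := by
  change ∫ x : ℝ, Complex.exp (Complex.I * s * x) * (auxh x : ℂ) = auxg s
  have h2π : (2 * π) ≠ 0 := by positivity
  have hF : FourierTransform.fourier auxg = fun w : ℝ => ((2 * π * auxh (2 * π * w) : ℝ) : ℂ) :=
    funext auxF
  have hFi : Integrable (FourierTransform.fourier auxg) := by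
    rw [hF]
    exact ((auxh_int.comp_mul_left' h2π).const_mul _).ofReal
  have h := congrFun (auxg_cont.fourierInv_fourier_eq auxg_int hFi) s
  rw [← h, Real.fourierInv_eq', hF]
  have h3 := Measure.integral_comp_mul_left
    (fun x : ℝ => Complex.exp (Complex.I * s * x) * (auxh x : ℂ)) (2 * π)
  have h4 : ∫ x : ℝ, Complex.exp (Complex.I * s * x) * (auxh x : ℂ) = (2 * π) •
    ∫ x : ℝ, Complex.exp (Complex.I * s * ((2 * π * x : ℝ) : ℂ)) * (auxh (2 * π * x) : ℂ) := by
    rw [h3, smul_smul, abs_of_pos (by positivity), mul_inv_cancel₀ h2π, one_smul]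
  rw [h4, ← integral_smul]
  congr 1 with w
  simp only [smul_eq_mul, Complex.real_smul, RCLike.inner_apply, conj_trivial]
  rw [show Complex.I * s * ((2 * π * w : ℝ) : ℂ) = ((2 * π * (s * w) : ℝ) : ℂ) * Complex.I by
    push_cast; ring]
  push_cast
  ring
end
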